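/- Let (Ȳ_t)_{t∈[0,T]} be a mean-continuous family of Ê-integrable random variables with l_T ≤ Ê[ħ(T, Ȳ_T)] ≤ u_T. Then there exists a unique solution (Y, R) = BSP̂_l^u(Ȳ, ħ) of the backward Skorokhod problem with sublinear expectation; equivalently, there is exactly one continuous function R : [0,T] → ℝ of bounded variation with R_0 = 0 such that, setting Y_t := Ȳ_t + R_T − R_t, one has l_t ≤ Ê[ħ(t, Y_t)] ≤ u_t for all t ∈ [0,T] and the minimality condition holds. -/

import Mathlib

open MeasureTheory Set Filter

/-- The sublinear expectation `Ê[X] = sup_{P ∈ Ps} ∫ X dP`. -/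
noncomputable def sublinE {Ω : Type*} [MeasurableSpace Ω] (Ps : Set (Measure Ω)) (X : Ω → ℝ) : ℝ :=
  sSup ((fun P => ∫ ω, X ω ∂P) '' Ps)

/-- `X` is Ê-integrable: measurable, integrable w.r.t. each `P ∈ Ps`, and
`sup_{P ∈ Ps} ∫ |X| dP < ∞`. -/
def EIntegrable {Ω : Type*} [MeasurableSpace Ω] (Ps : Set (Measure Ω)) (X : Ω → ℝ) : Prop :=
  Measurable X ∧ (∀ P ∈ Ps, Integrable X P) ∧ ∃ M : ℝ, ∀ P ∈ Ps, (∫ ω, |X ω| ∂P) ≤ M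

/-- Assumption (H_r) on the barriers `l, u` and the running loss function `hb`,
with constants `0 < cl ≤ cu` and `Ch > 0`. -/
def HrAssumption {Ω : Type*} [MeasurableSpace Ω] (T cl cu Ch : ℝ)
    (l u : ℝ → ℝ) (hb : ℝ → Ω → ℝ → ℝ) : Prop :=
  0 < cl ∧ cl ≤ cu ∧ 0 < Ch ∧
  ContinuousOn l (Icc 0 T) ∧ ContinuousOn u (Icc 0 T) ∧
  (∃ M : ℝ, ∀ t ∈ Icc (0:ℝ) T, |l t| ≤ M ∧ |u t| ≤ M) ∧
  (∃ ε > 0, ∀ t ∈ Icc (0:ℝ) T, ε ≤ u t - l t) ∧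
  (∀ t y, Measurable fun ω => hb t ω y) ∧
  (∀ ε > 0, ∃ δ > 0, ∀ (ω : Ω) (t t' y y' : ℝ),
      |t - t'| + |y - y'| < δ → |hb t ω y - hb t' ω y'| < ε) ∧
  (∀ t ω, StrictMono (hb t ω)) ∧
  (∀ t ω y, |hb t ω y| ≤ Ch * (1 + |y|)) ∧
  (∀ t ω y y', cl * |y - y'| ≤ |hb t ω y - hb t ω y'| ∧
    |hb t ω y - hb t ω y'| ≤ cu * |y - y'|)

/-- `H̄(t, x, X) = Ê[hb(t, x + X − Ê[X])]`. -/
noncomputable def Hbar {Ω : Type*} [MeasurableSpace Ω] (Ps : Set (Measure Ω))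
    (hb : ℝ → Ω → ℝ → ℝ) (t x : ℝ) (X : Ω → ℝ) : ℝ :=
  sublinE Ps (fun ω => hb t ω (x + X ω - sublinE Ps X))

/-- A family `(S_t)_{t ∈ [0,T]}` of Ê-integrable random variables which is continuous in mean. -/
def MeanContinuous {Ω : Type*} [MeasurableSpace Ω] (Ps : Set (Measure Ω)) (T : ℝ)
    (S : ℝ → Ω → ℝ) : Prop :=
  (∀ t ∈ Icc (0:ℝ) T, EIntegrable Ps (S t)) ∧
  ∀ t ∈ Icc (0:ℝ) T,
    Tendsto (fun s => sublinE Ps fun ω => |S s ω - S t ω|) (nhdsWithin t (Icc 0 T)) (nhds 0)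

/-- The minimality (Skorokhod) condition in its equivalent increment form: `R` may only
increase on intervals where `φ` stays strictly below `u` and may only decrease on intervals
where `φ` stays strictly above `l`. -/
def MinimalityIncr (T : ℝ) (φ l u R : ℝ → ℝ) : Prop :=
  ∀ s t : ℝ, 0 ≤ s → s < t → t ≤ T →
    ((∀ v, s < v → v ≤ t → φ v < u v) → R s ≤ R t) ∧
    ((∀ v, s < v → v ≤ t → l v < φ v) → R t ≤ R s)

/-- `(Y, R)` solves the backward Skorokhod problem with sublinear expectation for the data
`(Ybar, hb, l, u)`. -/
def IsBSPsol {Ω : Type*} [MeasurableSpace Ω] (Ps : Set (Measure Ω)) (T : ℝ)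
    (hb : ℝ → Ω → ℝ → ℝ) (l u : ℝ → ℝ) (Ybar Y : ℝ → Ω → ℝ) (R : ℝ → ℝ) : Prop :=
  (∀ t ∈ Icc (0:ℝ) T, ∀ ω, Y t ω = Ybar t ω + R T - R t) ∧
  (∀ t ∈ Icc (0:ℝ) T, l t ≤ sublinE Ps (fun ω => hb t ω (Y t ω)) ∧
    sublinE Ps (fun ω => hb t ω (Y t ω)) ≤ u t) ∧
  ContinuousOn R (Icc 0 T) ∧ BoundedVariationOn R (Icc 0 T) ∧ R 0 = 0 ∧
  MinimalityIncr T (fun v => sublinE Ps (fun ω => hb v ω (Y v ω))) l u R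

/-!
`Ê[ħ(t, Ȳ_t + k)]` is strictly increasing and bi-Lipschitz in `k` and continuous in `t`, so the
constraint on the mean loss says that `K t = R_T - R_t` lies in a band `[a t, b t]` with continuous
barriers `a < b`, and the problem is the deterministic reflection of the zero path in that band, run
backwards from `K T = 0`. By compactness `[0, T]` splits into finitely many intervals on which a
constant separates `a` from `b`. There only one barrier can act, and the solution is a running
maximum of `a` (or minimum of `b`) truncated at the terminal value; these pieces are glued. For
uniqueness, the difference of two solutions is nondecreasing wherever it is positive, yet vanishes
at `T`.
-/

open scoped NNReal

section SublinearExpectation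

variable {Ω : Type*} [MeasurableSpace Ω] {Ps : Set (Measure Ω)} {X Y : Ω → ℝ}

lemma EIntegrable.bddAbove_integral (hX : EIntegrable Ps X) :
    BddAbove ((fun P => ∫ ω, X ω ∂P) '' Ps) := by
  obtain ⟨-, hint, M, hM⟩ := hX
  refine ⟨M, forall_mem_image.2 fun P hP => ?_⟩
  exact (integral_mono (hint P hP) (hint P hP).abs fun ω => le_abs_self _).trans (hM P hP)

lemma EIntegrable.integral_le_sublinE (hX : EIntegrable Ps X) {P : Measure Ω} (hP : P ∈ Ps) :
    ∫ ω, X ω ∂P ≤ sublinE Ps X :=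
  le_csSup hX.bddAbove_integral (mem_image_of_mem _ hP)

lemma sublinE_le (hPs : Ps.Nonempty) {c : ℝ} (h : ∀ P ∈ Ps, ∫ ω, X ω ∂P ≤ c) :
    sublinE Ps X ≤ c :=
  csSup_le (hPs.image _) (forall_mem_image.2 h)

lemma sublinE_nonneg (hX : ∀ ω, 0 ≤ X ω) : 0 ≤ sublinE Ps X :=
  Real.sSup_nonneg (forall_mem_image.2 fun _ _ => integral_nonneg hX)

lemma EIntegrable.of_abs_le (hY : EIntegrable Ps Y) (hX : Measurable X)
    (h : ∀ ω, |X ω| ≤ Y ω) : EIntegrable Ps X := by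
  have hint : ∀ P ∈ Ps, Integrable X P := fun P hP =>
    (hY.2.1 P hP).mono' hX.aestronglyMeasurable (Eventually.of_forall h)
  exact ⟨hX, hint, sublinE Ps Y, fun P hP =>
    (integral_mono (hint P hP).abs (hY.2.1 P hP) h).trans (hY.integral_le_sublinE hP)⟩

lemma EIntegrable.const (hprob : ∀ P ∈ Ps, IsProbabilityMeasure P) (c : ℝ) :
    EIntegrable Ps fun _ => c :=
  ⟨measurable_const, fun P hP => have := hprob P hP; integrable_const c, |c|,
    fun P hP => have := hprob P hP; by simp⟩

lemma EIntegrable.abs (hX : EIntegrable Ps X) : EIntegrable Ps fun ω => |X ω| := by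
  obtain ⟨hmeas, hint, M, hM⟩ := hX
  exact ⟨hmeas.abs, fun P hP => (hint P hP).abs, M, by simpa only [abs_abs] using hM⟩

lemma EIntegrable.add (hX : EIntegrable Ps X) (hY : EIntegrable Ps Y) :
    EIntegrable Ps fun ω => X ω + Y ω := by
  refine ⟨hX.1.add hY.1, fun P hP => (hX.2.1 P hP).add (hY.2.1 P hP),
    sublinE Ps (fun ω => |X ω|) + sublinE Ps (fun ω => |Y ω|), fun P hP => ?_⟩
  have hX' := (hX.2.1 P hP).abs
  have hY' := (hY.2.1 P hP).abs
  calc ∫ ω, |X ω + Y ω| ∂P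
      ≤ ∫ ω, (|X ω| + |Y ω|) ∂P :=
        integral_mono ((hX.2.1 P hP).add (hY.2.1 P hP)).abs (hX'.add hY')
          fun ω => abs_add_le (X ω) (Y ω)
    _ = ∫ ω, |X ω| ∂P + ∫ ω, |Y ω| ∂P := integral_add hX' hY'
    _ ≤ _ := add_le_add (hX.abs.integral_le_sublinE hP) (hY.abs.integral_le_sublinE hP)

lemma EIntegrable.const_mul (hX : EIntegrable Ps X) (c : ℝ) :
    EIntegrable Ps fun ω => c * X ω := by
  obtain ⟨hmeas, hint, M, hM⟩ := hX
  refine ⟨hmeas.const_mul c, fun P hP => (hint P hP).const_mul c, |c| * M, fun P hP => ?_⟩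
  simp only [abs_mul, integral_const_mul]
  gcongr
  exact hM P hP

lemma EIntegrable.sub (hX : EIntegrable Ps X) (hY : EIntegrable Ps Y) :
    EIntegrable Ps fun ω => X ω - Y ω := by
  simpa only [neg_one_mul, ← sub_eq_add_neg] using hX.add (hY.const_mul (-1))

lemma sublinE_mono (hPs : Ps.Nonempty) (hX : EIntegrable Ps X) (hY : EIntegrable Ps Y)
    (h : ∀ ω, X ω ≤ Y ω) : sublinE Ps X ≤ sublinE Ps Y :=
  sublinE_le hPs fun P hP =>
    (integral_mono (hX.2.1 P hP) (hY.2.1 P hP) h).trans (hY.integral_le_sublinE hP)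

lemma sublinE_const (hPs : Ps.Nonempty) (hprob : ∀ P ∈ Ps, IsProbabilityMeasure P) (c : ℝ) :
    sublinE Ps (fun _ => c) = c := by
  have hconst : EqOn (fun P : Measure Ω => ∫ _, c ∂P) (fun _ => c) Ps := fun P hP => by
    have := hprob P hP
    simp
  rw [sublinE, hconst.image_eq, hPs.image_const, csSup_singleton]

lemma sublinE_add_le (hPs : Ps.Nonempty) (hX : EIntegrable Ps X) (hY : EIntegrable Ps Y) :
    sublinE Ps (fun ω => X ω + Y ω) ≤ sublinE Ps X + sublinE Ps Y :=
  sublinE_le hPs fun P hP => by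
    rw [integral_add (hX.2.1 P hP) (hY.2.1 P hP)]
    exact add_le_add (hX.integral_le_sublinE hP) (hY.integral_le_sublinE hP)

lemma sublinE_const_mul {c : ℝ} (hc : 0 ≤ c) (X : Ω → ℝ) :
    sublinE Ps (fun ω => c * X ω) = c * sublinE Ps X := by
  simp only [sublinE, integral_const_mul]
  rw [← smul_eq_mul, ← Real.sSup_smul_of_nonneg hc, ← image_smul, image_image]
  simp only [smul_eq_mul]

lemma abs_sublinE_sub_le (hPs : Ps.Nonempty) (hX : EIntegrable Ps X) (hY : EIntegrable Ps Y) :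
    |sublinE Ps X - sublinE Ps Y| ≤ sublinE Ps fun ω => |X ω - Y ω| := by
  have hdiff := (hX.sub hY).abs
  have hXY : sublinE Ps X ≤ sublinE Ps Y + sublinE Ps fun ω => |X ω - Y ω| :=
    (sublinE_mono hPs hX (hY.add hdiff) fun ω => by linarith [le_abs_self (X ω - Y ω)]).trans
      (sublinE_add_le hPs hY hdiff)
  have hYX : sublinE Ps Y ≤ sublinE Ps X + sublinE Ps fun ω => |X ω - Y ω| :=
    (sublinE_mono hPs hY (hX.add hdiff) fun ω => by linarith [neg_abs_le (X ω - Y ω)]).trans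
      (sublinE_add_le hPs hX hdiff)
  exact abs_sub_le_iff.2 ⟨by linarith, by linarith⟩

lemma MeanContinuous.continuousOn_sublinE (hPs : Ps.Nonempty) {T : ℝ} {S : ℝ → Ω → ℝ}
    (hS : MeanContinuous Ps T S) : ContinuousOn (fun t => sublinE Ps (S t)) (Icc 0 T) := by
  intro t ht
  refine tendsto_iff_dist_tendsto_zero.2 (squeeze_zero' (Eventually.of_forall fun _ => dist_nonneg)
    ?_ (hS.2 t ht))
  filter_upwards [self_mem_nhdsWithin] with s hs
  exact abs_sublinE_sub_le hPs (hS.1 s hs) (hS.1 t ht)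

lemma MeanContinuous.add_const (hprob : ∀ P ∈ Ps, IsProbabilityMeasure P) {T : ℝ}
    {S : ℝ → Ω → ℝ} (hS : MeanContinuous Ps T S) (k : ℝ) :
    MeanContinuous Ps T fun t ω => S t ω + k :=
  ⟨fun t ht => (hS.1 t ht).add (.const hprob k), by
    simpa only [add_sub_add_right_eq_sub] using hS.2⟩

lemma EIntegrable.comp_of_abs_le (hprob : ∀ P ∈ Ps, IsProbabilityMeasure P) {X : Ω → ℝ}
    (hX : EIntegrable Ps X) {f : Ω → ℝ → ℝ} (hmeas : ∀ y, Measurable fun ω => f ω y)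
    (hcont : ∀ ω, Continuous (f ω)) {C : ℝ} (hf : ∀ ω y, |f ω y| ≤ C * (1 + |y|)) :
    EIntegrable Ps fun ω => f ω (X ω) := by
  have hjoint : Measurable (Function.uncurry fun y ω => f ω y) :=
    measurable_uncurry_of_continuous_of_measurable hcont hmeas
  exact (((EIntegrable.const hprob 1).add hX.abs).const_mul C).of_abs_le
    (hjoint.comp (hX.1.prodMk measurable_id)) fun ω => hf ω (X ω)

lemma meanContinuous_of_forall_abs_sub_lt (hPs : Ps.Nonempty)
    (hprob : ∀ P ∈ Ps, IsProbabilityMeasure P) {T : ℝ} {S : ℝ → Ω → ℝ}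
    (hS : ∀ t ∈ Icc 0 T, EIntegrable Ps (S t))
    (hunif : ∀ ε > 0, ∃ δ > 0, ∀ ω s t, |s - t| < δ → |S s ω - S t ω| < ε) :
    MeanContinuous Ps T S := by
  refine ⟨hS, fun t ht => Metric.tendsto_nhdsWithin_nhds.2 fun ε hε => ?_⟩
  obtain ⟨δ, hδ, hS_close⟩ := hunif (ε / 2) (half_pos hε)
  refine ⟨δ, hδ, fun s hs hst => ?_⟩
  have hle : (sublinE Ps fun ω => |S s ω - S t ω|) ≤ ε / 2 :=
    (sublinE_mono hPs ((hS s hs).sub (hS t ht)).abs (.const hprob _)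
      fun ω => (hS_close ω s t hst).le).trans_eq (sublinE_const hPs hprob _)
  rw [Real.dist_0_eq_abs, abs_of_nonneg (sublinE_nonneg fun ω => abs_nonneg _)]
  linarith

end SublinearExpectation

section LevelPath

lemma strictMono_of_mul_sub_le {c : ℝ} (hc : 0 < c) {g : ℝ → ℝ}
    (hg : ∀ x y, x ≤ y → c * (y - x) ≤ g y - g x) : StrictMono g := fun x y hxy => by
  linarith [hg x y hxy.le, mul_pos hc (sub_pos.2 hxy)]

lemma surjective_of_mul_sub_le {c : ℝ} (hc : 0 < c) {g : ℝ → ℝ} (hcont : Continuous g)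
    (hg : ∀ x y, x ≤ y → c * (y - x) ≤ g y - g x) : Function.Surjective g := by
  refine hcont.surjective ?_ ?_
  · refine tendsto_atTop_mono' atTop ?_
      (tendsto_atTop_add_const_left _ (g 0) (tendsto_id.const_mul_atTop hc))
    filter_upwards [eventually_ge_atTop 0] with x hx
    simpa [add_comm] using le_sub_iff_add_le.1 (hg 0 x hx)
  · refine tendsto_atBot_mono' atBot ?_
      (tendsto_atBot_add_const_left _ (g 0) (tendsto_id.const_mul_atBot hc))
    filter_upwards [eventually_le_atBot 0] with x hx
    simp only [id]
    linarith [hg x 0 hx]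

lemma continuousOn_of_strictMono_apply_eq {X α β : Type*} [TopologicalSpace X]
    [LinearOrder α] [TopologicalSpace α] [OrderTopology α]
    [LinearOrder β] [TopologicalSpace β] [OrderClosedTopology β] {s : Set X} {G : X → α → β}
    (hmono : ∀ t ∈ s, StrictMono (G t)) (hG : ∀ k, ContinuousOn (fun t => G t k) s)
    {l : X → β} (hl : ContinuousOn l s) {a : X → α} (ha : ∀ t ∈ s, G t (a t) = l t) :
    ContinuousOn a s := by
  refine fun t ht => tendsto_order.2 ⟨fun k hk => ?_, fun k hk => ?_⟩
  · have hlt : G t k < l t := ha t ht ▸ hmono t ht hk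
    filter_upwards [(hG k t ht).eventually_lt (hl t ht) hlt, self_mem_nhdsWithin] with r hr hrs
    exact (hmono r hrs).lt_iff_lt.1 (ha r hrs ▸ hr)
  · have hlt : l t < G t k := ha t ht ▸ hmono t ht hk
    filter_upwards [(hl t ht).eventually_lt (hG k t ht) hlt, self_mem_nhdsWithin] with r hr hrs
    exact (hmono r hrs).lt_iff_lt.1 (ha r hrs ▸ hr)

lemma exists_continuousOn_apply_eq {X α β : Type*} [TopologicalSpace X]
    [LinearOrder α] [TopologicalSpace α] [OrderTopology α] [Nonempty α]
    [LinearOrder β] [TopologicalSpace β] [OrderClosedTopology β] {s : Set X} {G : X → α → β}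
    (hmono : ∀ t ∈ s, StrictMono (G t)) (hsurj : ∀ t ∈ s, Function.Surjective (G t))
    (hG : ∀ k, ContinuousOn (fun t => G t k) s) {l : X → β} (hl : ContinuousOn l s) :
    ∃ a : X → α, ContinuousOn a s ∧ ∀ t ∈ s, G t (a t) = l t := by
  have hpre : ∀ t, ∃ k, t ∈ s → G t k = l t := fun t => by
    by_cases ht : t ∈ s
    · exact (hsurj t ht (l t)).imp fun _ hk _ => hk
    · exact ⟨Classical.arbitrary α, fun hts => absurd hts ht⟩
  choose a ha using hpre
  exact ⟨a, continuousOn_of_strictMono_apply_eq hmono hG hl ha, ha⟩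

end LevelPath

section RunningLoss

variable {Ω : Type*} [MeasurableSpace Ω] {Ps : Set (Measure Ω)} {T c : ℝ} {K : ℝ≥0}
  {hb : ℝ → Ω → ℝ → ℝ} {S : ℝ → Ω → ℝ}

/-- A running loss function on `[0, T]`: increasing in the state with slopes between `c > 0` and
`K`, and turning every Ê-integrable random variable into a mean-continuous family. It abstracts the
running loss of `(H_r)` and also covers losses that are unbounded in `ω` at a fixed state. -/
structure IsRunningLoss (Ps : Set (Measure Ω)) (T c : ℝ) (K : ℝ≥0) (hb : ℝ → Ω → ℝ → ℝ) :
    Prop where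
  pos : 0 < c
  mul_sub_le : ∀ t ∈ Icc 0 T, ∀ ω x y, x ≤ y → c * (y - x) ≤ hb t ω y - hb t ω x
  lipschitzWith : ∀ t ∈ Icc 0 T, ∀ ω, LipschitzWith K (hb t ω)
  meanContinuous_const : ∀ X, EIntegrable Ps X → MeanContinuous Ps T fun t ω => hb t ω (X ω)

lemma IsRunningLoss.eIntegrable_comp (h : IsRunningLoss Ps T c K hb) {t : ℝ} (ht : t ∈ Icc 0 T)
    {X : Ω → ℝ} (hX : EIntegrable Ps X) : EIntegrable Ps fun ω => hb t ω (X ω) :=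
  (h.meanContinuous_const X hX).1 t ht

lemma IsRunningLoss.meanContinuous_comp (h : IsRunningLoss Ps T c K hb) (hPs : Ps.Nonempty)
    (hS : MeanContinuous Ps T S) : MeanContinuous Ps T fun t ω => hb t ω (S t ω) := by
  refine ⟨fun t ht => h.eIntegrable_comp ht (hS.1 t ht), fun t ht => ?_⟩
  have hfixed := h.meanContinuous_const (S t) (hS.1 t ht)
  have hbound : Tendsto (fun s => K * sublinE Ps (fun ω => |S s ω - S t ω|) +
      sublinE Ps fun ω => |hb s ω (S t ω) - hb t ω (S t ω)|) (nhdsWithin t (Icc 0 T)) (nhds 0) := by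
    simpa using ((hS.2 t ht).const_mul (K : ℝ)).add (hfixed.2 t ht)
  refine squeeze_zero' (Eventually.of_forall fun _ => sublinE_nonneg fun _ => abs_nonneg _) ?_
    hbound
  filter_upwards [self_mem_nhdsWithin] with s hs
  have hspace := ((hS.1 s hs).sub (hS.1 t ht)).abs.const_mul K
  have htime := ((hfixed.1 s hs).sub (hfixed.1 t ht)).abs
  rw [← sublinE_const_mul K.coe_nonneg]
  refine (sublinE_mono hPs ((h.eIntegrable_comp hs (hS.1 s hs)).sub
    (h.eIntegrable_comp ht (hS.1 t ht))).abs (hspace.add htime) fun ω => ?_).trans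
    (sublinE_add_le hPs hspace htime)
  exact (abs_sub_le _ (hb s ω (S t ω)) _).trans
    (add_le_add_left ((h.lipschitzWith s hs ω).dist_le_mul _ _) _)

lemma HrAssumption.isRunningLoss {l u : ℝ → ℝ} {cl cu Ch : ℝ}
    (h : HrAssumption T cl cu Ch l u hb) (hPs : Ps.Nonempty)
    (hprob : ∀ P ∈ Ps, IsProbabilityMeasure P) : IsRunningLoss Ps T cl cu.toNNReal hb := by
  obtain ⟨hcl, -, -, -, -, -, -, hmeas, hunif, hmono, hgrowth, hslope⟩ := h
  have hlip : ∀ t ω, LipschitzWith cu.toNNReal (hb t ω) := fun t ω =>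
    .of_dist_le' fun x y => (hslope t ω x y).2
  refine ⟨hcl, fun t _ ω x y hxy => ?_, fun t _ ω => hlip t ω, fun X hX => ?_⟩
  · simpa only [abs_of_nonneg (sub_nonneg.2 hxy),
      abs_of_nonneg (sub_nonneg.2 ((hmono t ω).monotone hxy))] using (hslope t ω y x).1
  · refine meanContinuous_of_forall_abs_sub_lt hPs hprob
      (fun t _ => hX.comp_of_abs_le hprob (hmeas t) (fun ω => (hlip t ω).continuous) (hgrowth t))
      fun ε hε => (hunif ε hε).imp fun δ ⟨hδ, hclose⟩ => ⟨hδ, fun ω s t hst => ?_⟩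
    exact hclose ω s t _ _ (by simpa using hst)

/-- The mean running loss `Ê[hb(t, S_t + k)]` of the family `S` shifted by the level `k`. -/
noncomputable def meanLoss (Ps : Set (Measure Ω)) (hb : ℝ → Ω → ℝ → ℝ) (S : ℝ → Ω → ℝ)
    (t k : ℝ) : ℝ :=
  sublinE Ps fun ω => hb t ω (S t ω + k)

lemma meanLoss_zero (t : ℝ) : meanLoss Ps hb S t 0 = sublinE Ps fun ω => hb t ω (S t ω) := by
  simp only [meanLoss, add_zero]

lemma IsRunningLoss.continuousOn_meanLoss (h : IsRunningLoss Ps T c K hb) (hPs : Ps.Nonempty)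
    (hprob : ∀ P ∈ Ps, IsProbabilityMeasure P) (hS : MeanContinuous Ps T S) (k : ℝ) :
    ContinuousOn (fun t => meanLoss Ps hb S t k) (Icc 0 T) :=
  (h.meanContinuous_comp hPs (hS.add_const hprob k)).continuousOn_sublinE hPs

lemma IsRunningLoss.lipschitzWith_meanLoss (h : IsRunningLoss Ps T c K hb) (hPs : Ps.Nonempty)
    (hprob : ∀ P ∈ Ps, IsProbabilityMeasure P) {t : ℝ} (ht : t ∈ Icc 0 T)
    (hSt : EIntegrable Ps (S t)) : LipschitzWith K (meanLoss Ps hb S t) := by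
  refine LipschitzWith.of_dist_le_mul fun k k' => ?_
  have hint (k : ℝ) : EIntegrable Ps fun ω => hb t ω (S t ω + k) :=
    h.eIntegrable_comp ht (hSt.add (.const hprob k))
  calc dist (meanLoss Ps hb S t k) (meanLoss Ps hb S t k')
      ≤ sublinE Ps fun ω => |hb t ω (S t ω + k) - hb t ω (S t ω + k')| :=
        abs_sublinE_sub_le hPs (hint k) (hint k')
    _ ≤ sublinE Ps fun _ => K * dist k k' :=
        sublinE_mono hPs ((hint k).sub (hint k')).abs (.const hprob _) fun ω => by
          simpa only [dist_add_left, Real.dist_eq] using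
            (h.lipschitzWith t ht ω).dist_le_mul (S t ω + k) (S t ω + k')
    _ = K * dist k k' := sublinE_const hPs hprob _

lemma IsRunningLoss.mul_sub_le_meanLoss (h : IsRunningLoss Ps T c K hb) (hPs : Ps.Nonempty)
    (hprob : ∀ P ∈ Ps, IsProbabilityMeasure P) {t : ℝ} (ht : t ∈ Icc 0 T)
    (hSt : EIntegrable Ps (S t)) {k k' : ℝ} (hk : k ≤ k') :
    c * (k' - k) ≤ meanLoss Ps hb S t k' - meanLoss Ps hb S t k := by
  have hint (k : ℝ) : EIntegrable Ps fun ω => hb t ω (S t ω + k) :=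
    h.eIntegrable_comp ht (hSt.add (.const hprob k))
  have hslope : meanLoss Ps hb S t k ≤ meanLoss Ps hb S t k' + -(c * (k' - k)) :=
    calc meanLoss Ps hb S t k
        ≤ sublinE Ps fun ω => hb t ω (S t ω + k') + -(c * (k' - k)) :=
          sublinE_mono hPs (hint k) ((hint k').add (.const hprob _)) fun ω => by
            linarith [h.mul_sub_le t ht ω (S t ω + k) (S t ω + k') (by linarith)]
      _ ≤ meanLoss Ps hb S t k' + sublinE Ps fun _ => -(c * (k' - k)) :=
          sublinE_add_le hPs (hint k') (.const hprob _)
      _ = meanLoss Ps hb S t k' + -(c * (k' - k)) := by rw [sublinE_const hPs hprob]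
  linarith

lemma IsRunningLoss.strictMono_meanLoss (h : IsRunningLoss Ps T c K hb) (hPs : Ps.Nonempty)
    (hprob : ∀ P ∈ Ps, IsProbabilityMeasure P) {t : ℝ} (ht : t ∈ Icc 0 T)
    (hSt : EIntegrable Ps (S t)) : StrictMono (meanLoss Ps hb S t) :=
  strictMono_of_mul_sub_le h.pos fun _ _ => h.mul_sub_le_meanLoss hPs hprob ht hSt

lemma IsRunningLoss.surjective_meanLoss (h : IsRunningLoss Ps T c K hb) (hPs : Ps.Nonempty)
    (hprob : ∀ P ∈ Ps, IsProbabilityMeasure P) {t : ℝ} (ht : t ∈ Icc 0 T)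
    (hSt : EIntegrable Ps (S t)) : Function.Surjective (meanLoss Ps hb S t) :=
  surjective_of_mul_sub_le h.pos (h.lipschitzWith_meanLoss hPs hprob ht hSt).continuous
    fun _ _ => h.mul_sub_le_meanLoss hPs hprob ht hSt

lemma IsRunningLoss.exists_continuousOn_meanLoss_eq (h : IsRunningLoss Ps T c K hb)
    (hPs : Ps.Nonempty) (hprob : ∀ P ∈ Ps, IsProbabilityMeasure P) (hS : MeanContinuous Ps T S)
    {l : ℝ → ℝ} (hl : ContinuousOn l (Icc 0 T)) :
    ∃ a : ℝ → ℝ, ContinuousOn a (Icc 0 T) ∧ ∀ t ∈ Icc 0 T, meanLoss Ps hb S t (a t) = l t :=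
  exists_continuousOn_apply_eq
    (fun t ht => h.strictMono_meanLoss hPs hprob ht (hS.1 t ht))
    (fun t ht => h.surjective_meanLoss hPs hprob ht (hS.1 t ht))
    (h.continuousOn_meanLoss hPs hprob hS) hl

end RunningLoss

section BackwardMax

/-- The running maximum `max_{r ∈ [t, m]} f r`, taken backwards in time from `m`. -/
noncomputable def backwardMax (f : ℝ → ℝ) (m t : ℝ) : ℝ :=
  sSup (f '' Icc t m)

variable {f : ℝ → ℝ} {s m t r : ℝ}

lemma le_backwardMax (hf : ContinuousOn f (Icc s m)) (hst : s ≤ t) (hr : r ∈ Icc t m) :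
    f r ≤ backwardMax f m t :=
  (hf.mono (Icc_subset_Icc_left hst)).le_sSup_image_Icc hr

lemma exists_eq_backwardMax (hf : ContinuousOn f (Icc s m)) (ht : t ∈ Icc s m) :
    ∃ r ∈ Icc t m, f r = backwardMax f m t :=
  (isCompact_Icc.image_of_continuousOn (hf.mono (Icc_subset_Icc_left ht.1))).sSup_mem
    ((nonempty_Icc.2 ht.2).image f)

lemma backwardMax_self (f : ℝ → ℝ) (m : ℝ) : backwardMax f m m = f m := by
  rw [backwardMax, Icc_self, image_singleton, csSup_singleton]

lemma antitoneOn_backwardMax (hf : ContinuousOn f (Icc s m)) :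
    AntitoneOn (backwardMax f m) (Icc s m) := by
  intro p hp q hq hpq
  obtain ⟨r, hr, heq⟩ := exists_eq_backwardMax hf hq
  exact heq ▸ le_backwardMax hf hp.1 ⟨hpq.trans hr.1, hr.2⟩

lemma continuousOn_backwardMax (hf : ContinuousOn f (Icc s m)) :
    ContinuousOn (backwardMax f m) (Icc s m) := by
  intro x hx
  have hsm : s ≤ m := hx.1.trans hx.2
  let F : ℝ → ℝ := IccExtend hsm ((Icc s m).domRestrict f)
  have hF : Continuous F := hf.domRestrict.Icc_extend'
  have hsup : Continuous fun t =>
      sSup ((fun θ => F (AffineMap.lineMap t m θ)) '' Icc (0 : ℝ) 1) := by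
    refine isCompact_Icc.continuous_sSup (hF.comp ?_)
    simp only [AffineMap.lineMap_apply]
    fun_prop
  refine hsup.continuousOn.congr (fun t ht => ?_) x hx
  have hFf : EqOn F f (Icc t m) := fun r hr =>
    IccExtend_of_mem hsm _ (Icc_subset_Icc_left ht.1 hr)
  rw [backwardMax, ← hFf.image_eq, ← uIcc_of_le ht.2, ← segment_eq_uIcc,
    segment_eq_image_lineMap, image_image]

end BackwardMax

lemma boundedVariationOn_const_sub {α : Type*} [LinearOrder α] {f : α → ℝ} {s : Set α}
    (hf : BoundedVariationOn f s) (c : ℝ) : BoundedVariationOn (fun t => c - f t) s :=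
  (IsometryEquiv.subLeft c).isometry.lipschitz.comp_boundedVariationOn hf

lemma boundedVariationOn_neg {α : Type*} [LinearOrder α] {f : α → ℝ} {s : Set α}
    (hf : BoundedVariationOn f s) : BoundedVariationOn (fun t => -f t) s := by
  simpa only [zero_sub] using boundedVariationOn_const_sub hf 0

lemma le_of_forall_exists_le_right {f : ℝ → ℝ} {p m : ℝ} (hpm : p ≤ m)
    (hf : ContinuousOn f (Icc p m))
    (hstep : ∀ x ∈ Ico p m, f p ≤ f x → ∃ y ∈ Ioc x m, f x ≤ f y) : f p ≤ f m := by
  have hclosed : IsClosed ({t | f p ≤ f t} ∩ Icc p m) :=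
    inter_comm _ _ ▸ hf.preimage_isClosed_of_isClosed isClosed_Icc isClosed_Ici
  refine hclosed.mem_of_ge_of_forall_exists_gt (le_refl (f p)) hpm fun x ⟨hpx, hx⟩ => ?_
  obtain ⟨y, hy, hxy⟩ := hstep x hx hpx
  exact ⟨y, le_trans hpx hxy, hy⟩

section BackwardReflection

/-- `K` is a continuous path of bounded variation on `[s, m]` inside the band `[a, b]` which, run
backwards in time from `m`, rises only while it is pushed by the lower barrier `a` and falls only
while it is pushed by the upper barrier `b`. In the backward Skorokhod problem `K t = R_T - R_t`,
and the barriers are the levels at which the mean loss equals `l` and `u`. -/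
structure IsBackwardReflection (a b : ℝ → ℝ) (s m : ℝ) (K : ℝ → ℝ) : Prop where
  continuousOn : ContinuousOn K (Icc s m)
  boundedVariationOn : BoundedVariationOn K (Icc s m)
  mem_Icc : ∀ t ∈ Icc s m, K t ∈ Icc (a t) (b t)
  le_of_lt_upper : ∀ p q, s ≤ p → p < q → q ≤ m → (∀ v ∈ Ioc p q, K v < b v) → K q ≤ K p
  le_of_lower_lt : ∀ p q, s ≤ p → p < q → q ≤ m → (∀ v ∈ Ioc p q, a v < K v) → K p ≤ K q

variable {a b K K' : ℝ → ℝ} {s m T c k : ℝ}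

namespace IsBackwardReflection

lemma neg (h : IsBackwardReflection (-b) (-a) s m K) : IsBackwardReflection a b s m (-K) where
  continuousOn := h.continuousOn.neg
  boundedVariationOn := boundedVariationOn_neg h.boundedVariationOn
  mem_Icc t ht := ⟨le_neg_of_le_neg (h.mem_Icc t ht).2, neg_le_of_neg_le (h.mem_Icc t ht).1⟩
  le_of_lt_upper p q hp hpq hq hlt :=
    neg_le_neg (h.le_of_lower_lt p q hp hpq hq fun v hv => neg_lt_of_neg_lt (hlt v hv))
  le_of_lower_lt p q hp hpq hq hlt :=
    neg_le_neg (h.le_of_lt_upper p q hp hpq hq fun v hv => lt_neg_of_lt_neg (hlt v hv))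

lemma congr (h : IsBackwardReflection a b s m K) (hK : EqOn K' K (Icc s m)) :
    IsBackwardReflection a b s m K' where
  continuousOn := h.continuousOn.congr hK
  boundedVariationOn := by
    rw [BoundedVariationOn, eVariationOn.congr hK]
    exact h.boundedVariationOn
  mem_Icc t ht := hK ht ▸ h.mem_Icc t ht
  le_of_lt_upper p q hp hpq hq hlt := by
    rw [hK ⟨hp, hpq.le.trans hq⟩, hK ⟨hp.trans hpq.le, hq⟩]
    exact h.le_of_lt_upper p q hp hpq hq fun v hv =>
      hK ⟨hp.trans hv.1.le, hv.2.trans hq⟩ ▸ hlt v hv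
  le_of_lower_lt p q hp hpq hq hlt := by
    rw [hK ⟨hp, hpq.le.trans hq⟩, hK ⟨hp.trans hpq.le, hq⟩]
    exact h.le_of_lower_lt p q hp hpq hq fun v hv =>
      hK ⟨hp.trans hv.1.le, hv.2.trans hq⟩ ▸ hlt v hv

lemma union (hsm : s ≤ m) (hmT : m ≤ T) (h₁ : IsBackwardReflection a b s m K)
    (h₂ : IsBackwardReflection a b m T K) : IsBackwardReflection a b s T K where
  continuousOn := by
    rw [← Icc_union_Icc_eq_Icc hsm hmT]
    exact h₁.continuousOn.union_of_isClosed h₂.continuousOn isClosed_Icc isClosed_Icc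
  boundedVariationOn := by
    rw [BoundedVariationOn, ← Icc_union_Icc_eq_Icc hsm hmT,
      eVariationOn.union K (isGreatest_Icc hsm) (isLeast_Icc hmT)]
    exact ENNReal.add_ne_top.2 ⟨h₁.boundedVariationOn, h₂.boundedVariationOn⟩
  mem_Icc t ht := (le_total t m).elim (fun htm => h₁.mem_Icc t ⟨ht.1, htm⟩)
    fun hmt => h₂.mem_Icc t ⟨hmt, ht.2⟩
  le_of_lt_upper p q hp hpq hq hlt := by
    rcases le_or_gt q m with hqm | hmq
    · exact h₁.le_of_lt_upper p q hp hpq hqm hlt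
    rcases le_or_gt m p with hmp | hpm
    · exact h₂.le_of_lt_upper p q hmp hpq hq hlt
    · exact (h₂.le_of_lt_upper m q le_rfl hmq hq fun v hv => hlt v ⟨hpm.trans hv.1, hv.2⟩).trans
        (h₁.le_of_lt_upper p m hp hpm le_rfl fun v hv => hlt v ⟨hv.1, hv.2.trans hmq.le⟩)
  le_of_lower_lt p q hp hpq hq hlt := by
    rcases le_or_gt q m with hqm | hmq
    · exact h₁.le_of_lower_lt p q hp hpq hqm hlt
    rcases le_or_gt m p with hmp | hpm
    · exact h₂.le_of_lower_lt p q hmp hpq hq hlt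
    · exact (h₁.le_of_lower_lt p m hp hpm le_rfl fun v hv => hlt v ⟨hv.1, hv.2.trans hmq.le⟩).trans
        (h₂.le_of_lower_lt m q le_rfl hmq hq fun v hv => hlt v ⟨hpm.trans hv.1, hv.2⟩)

lemma singleton (hk : k ∈ Icc (a m) (b m)) : IsBackwardReflection a b m m fun _ => k where
  continuousOn := continuousOn_const
  boundedVariationOn := .of_subsingleton (Icc_self m ▸ subsingleton_singleton)
  mem_Icc t ht := by rwa [le_antisymm ht.2 ht.1]
  le_of_lt_upper _ _ _ _ _ _ := le_rfl
  le_of_lower_lt _ _ _ _ _ _ := le_rfl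

lemma glue (hsm : s ≤ m) (hmT : m ≤ T) (h₁ : IsBackwardReflection a b s m K)
    (h₂ : IsBackwardReflection a b m T K') (heq : K m = K' m) :
    IsBackwardReflection a b s T fun t => if t ≤ m then K t else K' t := by
  refine union hsm hmT (h₁.congr fun t ht => if_pos ht.2) (h₂.congr fun t ht => ?_)
  rcases ht.1.eq_or_lt with rfl | hmt
  · simpa using heq
  · exact if_neg hmt.not_ge

-- On an interval where `K' < K`, the path `K` is off its lower and `K'` off its upper barrier, so
-- `K - K'` is nondecreasing there: once positive, it stays positive up to the terminal time.
lemma le_of_terminal_eq (h : IsBackwardReflection a b s m K) (h' : IsBackwardReflection a b s m K')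
    (hm : K m = K' m) : ∀ t ∈ Icc s m, K t ≤ K' t := by
  intro p hp
  by_contra! hlt
  have hcont : ContinuousOn (fun t => K t - K' t) (Icc p m) :=
    (h.continuousOn.sub h'.continuousOn).mono (Icc_subset_Icc_left hp.1)
  have hgap : K p - K' p ≤ K m - K' m := by
    refine le_of_forall_exists_le_right hp.2 hcont fun x hx hpx => ?_
    have hpos : ∀ᶠ t in nhdsWithin x (Ioi x), 0 < K t - K' t :=
      ((hcont x (Ico_subset_Icc_self hx)).mono_of_mem_nhdsWithin
        (mem_of_superset (Ioc_mem_nhdsGT hx.2) fun t ht => ⟨hx.1.trans ht.1.le, ht.2⟩))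
        |>.eventually_const_lt (by linarith)
    obtain ⟨y, hxy, hy⟩ := mem_nhdsGT_iff_exists_Ioc_subset.1
      (hpos.and (Ioc_mem_nhdsGT hx.2))
    have hym : y ≤ m := (hy ⟨hxy, le_rfl⟩).2.2
    have hsx : s ≤ x := hp.1.trans hx.1
    have hK : K x ≤ K y := h.le_of_lower_lt x y hsx hxy hym fun v hv =>
      (h'.mem_Icc v ⟨hsx.trans hv.1.le, hv.2.trans hym⟩).1.trans_lt (sub_pos.1 (hy hv).1)
    have hK' : K' y ≤ K' x := h'.le_of_lt_upper x y hsx hxy hym fun v hv =>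
      (sub_pos.1 (hy hv).1).trans_le (h.mem_Icc v ⟨hsx.trans hv.1.le, hv.2.trans hym⟩).2
    exact ⟨y, ⟨hxy, hym⟩, sub_le_sub hK hK'⟩
  linarith

lemma eqOn (h : IsBackwardReflection a b s m K) (h' : IsBackwardReflection a b s m K')
    (hm : K m = K' m) : EqOn K K' (Icc s m) := fun t ht =>
  (h.le_of_terminal_eq h' hm t ht).antisymm (h'.le_of_terminal_eq h hm.symm t ht)

end IsBackwardReflection

lemma boundedVariationOn_Icc_of_antitoneOn (hanti : AntitoneOn K (Icc s m)) :
    BoundedVariationOn K (Icc s m) := by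
  rcases lt_or_ge m s with hms | hsm
  · exact .of_subsingleton (Icc_eq_empty hms.not_ge ▸ subsingleton_empty)
  have hneg : BoundedVariationOn (fun t => -K t) (Icc s m) :=
    MonotoneOn.boundedVariationOn (C := max |-K s| |-K m|) hanti.neg fun t ht =>
      abs_le_max_abs_abs (neg_le_neg (hanti (left_mem_Icc.2 hsm) ht ht.1))
        (neg_le_neg (hanti ht (right_mem_Icc.2 hsm) ht.2))
  simpa only [neg_neg] using boundedVariationOn_neg hneg

lemma backwardMax_max_le_of_lower_lt (ha : ContinuousOn a (Icc s m)) {p q : ℝ} (hp : s ≤ p)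
    (hpq : p < q) (hq : q ≤ m)
    (hlt : ∀ v ∈ Ioc p q, a v < backwardMax (fun r => max (a r) k) m v) :
    backwardMax (fun r => max (a r) k) m p ≤ backwardMax (fun r => max (a r) k) m q := by
  have hak : ContinuousOn (fun r => max (a r) k) (Icc s m) := ha.sup continuousOn_const
  have hsub : Icc p q ⊆ Icc s m := Icc_subset_Icc hp hq
  have hcl : closure (Ioc p q) = Icc p q := closure_Ioc hpq.ne
  refine le_on_closure (s := Ioc p q) (g := fun _ => backwardMax (fun r => max (a r) k) m q)
    (fun w hw => ?_) (hcl ▸ (continuousOn_backwardMax hak).mono hsub) continuousOn_const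
    (hcl ▸ left_mem_Icc.2 hpq.le)
  have hw' := hsub (Ioc_subset_Icc_self hw)
  obtain ⟨r, hr, hmax⟩ := exists_eq_backwardMax hak hw'
  rw [← hmax]
  rcases le_or_gt q r with hqr | hrq
  · exact le_backwardMax hak (hp.trans hpq.le) ⟨hqr, hr.2⟩
  have hra : a r < max (a r) k :=
    (hlt r ⟨hw.1.trans_le hr.1, hrq.le⟩).trans_le
      ((antitoneOn_backwardMax hak hw' ⟨hw'.1.trans hr.1, hr.2⟩ hr.1).trans_eq hmax.symm)
  rw [max_eq_right (not_lt.1 fun hka => hra.ne (max_eq_left hka.le).symm)]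
  exact (le_max_right _ _).trans (le_backwardMax hak (hp.trans hpq.le) ⟨le_rfl, hq⟩)

lemma isBackwardReflection_backwardMax (ha : ContinuousOn a (Icc s m))
    (hac : ∀ t ∈ Icc s m, a t ≤ c) (hcb : ∀ t ∈ Icc s m, c ≤ b t) (hkc : k ≤ c) :
    IsBackwardReflection a b s m (backwardMax (fun r => max (a r) k) m) := by
  have hak : ContinuousOn (fun r => max (a r) k) (Icc s m) := ha.sup continuousOn_const
  have hanti := antitoneOn_backwardMax hak
  refine ⟨continuousOn_backwardMax hak, boundedVariationOn_Icc_of_antitoneOn hanti, fun t ht => ?_,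
    fun p q hp hpq hq _ => hanti ⟨hp, hpq.le.trans hq⟩ ⟨hp.trans hpq.le, hq⟩ hpq.le,
    fun p q hp hpq hq => backwardMax_max_le_of_lower_lt ha hp hpq hq⟩
  obtain ⟨r, hr, hmax⟩ := exists_eq_backwardMax hak ht
  refine ⟨(le_max_left _ _).trans (le_backwardMax hak ht.1 (left_mem_Icc.2 ht.2)), ?_⟩
  exact hmax ▸ (max_le (hac r ⟨ht.1.trans hr.1, hr.2⟩) hkc).trans (hcb t ht)

lemma exists_isBackwardReflection_of_separated (ha : ContinuousOn a (Icc s m))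
    (hb : ContinuousOn b (Icc s m)) (hac : ∀ t ∈ Icc s m, a t ≤ c) (hcb : ∀ t ∈ Icc s m, c ≤ b t)
    (hk : k ∈ Icc (a m) (b m)) : ∃ K, IsBackwardReflection a b s m K ∧ K m = k := by
  rcases le_total k c with hkc | hck
  · exact ⟨_, isBackwardReflection_backwardMax ha hac hcb hkc, by
      rw [backwardMax_self, max_eq_right hk.1]⟩
  · have hrefl := isBackwardReflection_backwardMax (a := -b) (b := -a) hb.neg
      (fun t ht => neg_le_neg (hcb t ht)) (fun t ht => neg_le_neg (hac t ht)) (neg_le_neg hck)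
    exact ⟨_, hrefl.neg, by
      rw [Pi.neg_apply, backwardMax_self, Pi.neg_apply, max_eq_right (neg_le_neg hk.2), neg_neg]⟩

lemma exists_monotone_separated (hsm : s ≤ m) (ha : ContinuousOn a (Icc s m))
    (hb : ContinuousOn b (Icc s m)) (hab : ∀ t ∈ Icc s m, a t < b t) :
    ∃ τ : ℕ → Icc s m, (τ 0 : ℝ) = s ∧ Monotone τ ∧ (∃ N, (τ N : ℝ) = m) ∧
      ∀ n, ∃ c, ∀ t ∈ Icc (τ n : ℝ) (τ (n + 1)), a t ≤ c ∧ c ≤ b t := by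
  let U (c : ℝ) : Set (Icc s m) := {t | a t < c ∧ c < b t}
  have hU : ∀ c, IsOpen (U c) := fun c =>
    (isOpen_lt ha.domRestrict continuous_const).inter (isOpen_lt continuous_const hb.domRestrict)
  have hcover : univ ⊆ ⋃ c, U c := fun t _ => mem_iUnion.2 (exists_between (hab t t.2))
  obtain ⟨τ, hτ0, hτmono, ⟨N, hN⟩, hτU⟩ := exists_monotone_Icc_subset_open_cover_Icc hsm hU hcover
  refine ⟨τ, hτ0, hτmono, ⟨N, hN N le_rfl⟩, fun n => ?_⟩
  obtain ⟨c, hc⟩ := hτU n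
  refine ⟨c, fun t ht => ?_⟩
  have htU : (⟨t, (τ n).2.1.trans ht.1, ht.2.trans (τ (n + 1)).2.2⟩ : Icc s m) ∈ U c := hc ht
  exact ⟨htU.1.le, htU.2.le⟩

theorem exists_isBackwardReflection (hsm : s ≤ m) (ha : ContinuousOn a (Icc s m))
    (hb : ContinuousOn b (Icc s m)) (hab : ∀ t ∈ Icc s m, a t < b t)
    (hk : k ∈ Icc (a m) (b m)) : ∃ K, IsBackwardReflection a b s m K ∧ K m = k := by
  obtain ⟨τ, hτ0, hτmono, ⟨N, hN⟩, hsep⟩ := exists_monotone_separated hsm ha hb hab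
  have hpartial : ∀ n k, k ∈ Icc (a (τ n)) (b (τ n)) →
      ∃ K, IsBackwardReflection a b s (τ n) K ∧ K (τ n) = k := by
    intro n
    induction n with
    | zero =>
      intro k hk
      rw [hτ0] at hk ⊢
      exact ⟨fun _ => k, .singleton hk, rfl⟩
    | succ n ih =>
      intro k hk
      have hle : (τ n : ℝ) ≤ τ (n + 1) := hτmono n.le_succ
      have hsub : Icc (τ n : ℝ) (τ (n + 1)) ⊆ Icc s m :=
        Icc_subset_Icc (τ n).2.1 (τ (n + 1)).2.2
      obtain ⟨c, hc⟩ := hsep n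
      obtain ⟨K₂, hK₂, hK₂k⟩ := exists_isBackwardReflection_of_separated (ha.mono hsub)
        (hb.mono hsub) (fun t ht => (hc t ht).1) (fun t ht => (hc t ht).2) hk
      obtain ⟨K₁, hK₁, hK₁K₂⟩ := ih (K₂ (τ n)) (hK₂.mem_Icc _ (left_mem_Icc.2 hle))
      refine ⟨_, hK₁.glue (τ n).2.1 hle hK₂ hK₁K₂, ?_⟩
      split_ifs with hge
      · rw [← hK₂k, le_antisymm hge hle, hK₁K₂]
      · exact hK₂k
  simpa only [hN] using hpartial N k (by rwa [hN])

end BackwardReflection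

section BackwardSkorokhod

variable {Ω : Type*} [MeasurableSpace Ω] {Ps : Set (Measure Ω)} {T : ℝ} {l u a b : ℝ → ℝ}
  {hb : ℝ → Ω → ℝ → ℝ} {Ybar : ℝ → Ω → ℝ} {R : ℝ → ℝ}

lemma minimalityIncr_iff {φ : ℝ → ℝ} (hlow : ∀ t ∈ Icc 0 T, l t < φ t ↔ a t < R T - R t)
    (hupp : ∀ t ∈ Icc 0 T, φ t < u t ↔ R T - R t < b t) :
    MinimalityIncr T φ l u R ↔ ∀ p q, 0 ≤ p → p < q → q ≤ T →
      ((∀ v ∈ Ioc p q, R T - R v < b v) → R T - R q ≤ R T - R p) ∧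
      ((∀ v ∈ Ioc p q, a v < R T - R v) → R T - R p ≤ R T - R q) := by
  refine forall₅_congr fun p q hp _ hq => ?_
  have hsub : Ioc p q ⊆ Icc 0 T := fun v hv => ⟨hp.trans hv.1.le, hv.2.trans hq⟩
  have hlow' : (∀ v, p < v → v ≤ q → l v < φ v) ↔ ∀ v ∈ Ioc p q, a v < R T - R v := by
    simp only [mem_Ioc, and_imp]
    exact forall₃_congr fun v hpv hvq => hlow v (hsub ⟨hpv, hvq⟩)
  have hupp' : (∀ v, p < v → v ≤ q → φ v < u v) ↔ ∀ v ∈ Ioc p q, R T - R v < b v := by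
    simp only [mem_Ioc, and_imp]
    exact forall₃_congr fun v hpv hvq => hupp v (hsub ⟨hpv, hvq⟩)
  rw [hlow', hupp', sub_le_sub_iff_left, sub_le_sub_iff_left]

lemma isBackwardReflection_const_sub_iff {c s m : ℝ} :
    IsBackwardReflection a b s m (fun t => c - R t) ↔
      (∀ t ∈ Icc s m, c - R t ∈ Icc (a t) (b t)) ∧ ContinuousOn R (Icc s m) ∧
      BoundedVariationOn R (Icc s m) ∧ ∀ p q, s ≤ p → p < q → q ≤ m →
        ((∀ v ∈ Ioc p q, c - R v < b v) → c - R q ≤ c - R p) ∧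
        ((∀ v ∈ Ioc p q, a v < c - R v) → c - R p ≤ c - R q) := by
  refine ⟨fun h => ⟨h.mem_Icc, ?_, ?_, fun p q hp hpq hq =>
    ⟨h.le_of_lt_upper p q hp hpq hq, h.le_of_lower_lt p q hp hpq hq⟩⟩,
    fun ⟨hmem, hcont, hbv, hmin⟩ => ⟨continuousOn_const.sub hcont,
      boundedVariationOn_const_sub hbv c, hmem, fun p q hp hpq hq => (hmin p q hp hpq hq).1,
      fun p q hp hpq hq => (hmin p q hp hpq hq).2⟩⟩
  · exact (continuousOn_const.sub h.continuousOn).congr fun t _ => (sub_sub_cancel c (R t)).symm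
  · simpa only [sub_sub_cancel] using boundedVariationOn_const_sub h.boundedVariationOn c

lemma isBSPsol_iff_isBackwardReflection
    (hmono : ∀ t ∈ Icc 0 T, StrictMono (meanLoss Ps hb Ybar t))
    (hal : ∀ t ∈ Icc 0 T, meanLoss Ps hb Ybar t (a t) = l t)
    (hbu : ∀ t ∈ Icc 0 T, meanLoss Ps hb Ybar t (b t) = u t) :
    IsBSPsol Ps T hb l u Ybar (fun t ω => Ybar t ω + R T - R t) R ↔
      IsBackwardReflection a b 0 T (fun t => R T - R t) ∧ R 0 = 0 := by
  have hloss : ∀ t, (sublinE Ps fun ω => hb t ω (Ybar t ω + R T - R t)) =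
      meanLoss Ps hb Ybar t (R T - R t) := fun t => by simp only [meanLoss, add_sub_assoc]
  have hmem : (∀ t ∈ Icc 0 T, l t ≤ meanLoss Ps hb Ybar t (R T - R t) ∧
      meanLoss Ps hb Ybar t (R T - R t) ≤ u t) ↔ ∀ t ∈ Icc 0 T, R T - R t ∈ Icc (a t) (b t) :=
    forall₂_congr fun t ht => by
      rw [← hal t ht, ← hbu t ht, (hmono t ht).le_iff_le, (hmono t ht).le_iff_le, mem_Icc]
  have hmin := minimalityIncr_iff (R := R) (l := l) (u := u) (a := a) (b := b)
    (φ := fun t => meanLoss Ps hb Ybar t (R T - R t))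
    (fun t ht => by rw [← hal t ht, (hmono t ht).lt_iff_lt])
    (fun t ht => by rw [← hbu t ht, (hmono t ht).lt_iff_lt])
  simp only [IsBSPsol, hloss, hmem, hmin, isBackwardReflection_const_sub_iff, implies_true,
    true_and]
  tauto

lemma HrAssumption.lower_lt_upper {cl cu Ch : ℝ} (h : HrAssumption T cl cu Ch l u hb) :
    ∀ t ∈ Icc 0 T, l t < u t := by
  obtain ⟨-, -, -, -, -, -, ⟨ε, hε, hgap⟩, -⟩ := h
  exact fun t ht => by linarith [hgap t ht]

theorem stmt6_general {c : ℝ} {K : ℝ≥0} (hT : 0 ≤ T) (hPs : Ps.Nonempty)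
    (hprob : ∀ P ∈ Ps, IsProbabilityMeasure P) (hl : ContinuousOn l (Icc 0 T))
    (hu : ContinuousOn u (Icc 0 T)) (hlu : ∀ t ∈ Icc 0 T, l t < u t)
    (hloss : IsRunningLoss Ps T c K hb) (hYbar : MeanContinuous Ps T Ybar)
    (htermL : l T ≤ sublinE Ps fun ω => hb T ω (Ybar T ω))
    (htermU : (sublinE Ps fun ω => hb T ω (Ybar T ω)) ≤ u T) :
    ∃ R : ℝ → ℝ,
      IsBSPsol Ps T hb l u Ybar (fun t ω => Ybar t ω + R T - R t) R ∧
      ∀ R' : ℝ → ℝ,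
        IsBSPsol Ps T hb l u Ybar (fun t ω => Ybar t ω + R' T - R' t) R' →
        ∀ t ∈ Icc (0:ℝ) T, R' t = R t := by
  have hTmem : T ∈ Icc 0 T := right_mem_Icc.2 hT
  have hmono : ∀ t ∈ Icc 0 T, StrictMono (meanLoss Ps hb Ybar t) := fun t ht =>
    hloss.strictMono_meanLoss hPs hprob ht (hYbar.1 t ht)
  obtain ⟨a, hacont, hal⟩ := hloss.exists_continuousOn_meanLoss_eq hPs hprob hYbar hl
  obtain ⟨b, hbcont, hbu⟩ := hloss.exists_continuousOn_meanLoss_eq hPs hprob hYbar hu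
  have hterm : (0 : ℝ) ∈ Icc (a T) (b T) := by
    refine ⟨(hmono T hTmem).le_iff_le.1 ?_, (hmono T hTmem).le_iff_le.1 ?_⟩
    · rwa [hal T hTmem, meanLoss_zero]
    · rwa [hbu T hTmem, meanLoss_zero]
  have hab : ∀ t ∈ Icc 0 T, a t < b t := fun t ht =>
    (hmono t ht).lt_iff_lt.1 (by simpa only [hal t ht, hbu t ht] using hlu t ht)
  obtain ⟨K, hK, hKT⟩ := exists_isBackwardReflection hT hacont hbcont hab hterm
  have hiff (R : ℝ → ℝ) := isBSPsol_iff_isBackwardReflection (R := R) hmono hal hbu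
  refine ⟨fun t => K 0 - K t, (hiff fun t => K 0 - K t).2 ⟨?_, sub_self _⟩, fun R' hR' t ht => ?_⟩
  · simpa only [hKT, sub_zero, sub_sub_cancel] using hK
  · obtain ⟨hrefl, hR'0⟩ := (hiff R').1 hR'
    have heq : EqOn (fun t => R' T - R' t) K (Icc 0 T) := hrefl.eqOn hK (by simp [hKT])
    linarith [heq ht, heq (left_mem_Icc.2 hT)]

end BackwardSkorokhod

/-- existence and uniqueness of the solution of the backward Skorokhod problem
with sublinear expectation: there is exactly one continuous `R` of bounded variation with
`R 0 = 0` such that, setting `Y_t := Ȳ_t + R_T − R_t`, the barrier constraint and the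
minimality condition hold. -/
theorem stmt6 {Ω : Type*} [MeasurableSpace Ω] (T cl cu Ch : ℝ) (hT : 0 < T)
    (Ps : Set (Measure Ω)) (hPs : Ps.Nonempty) (hprob : ∀ P ∈ Ps, IsProbabilityMeasure P)
    (l u : ℝ → ℝ) (hb : ℝ → Ω → ℝ → ℝ) (hHr : HrAssumption T cl cu Ch l u hb)
    (Ybar : ℝ → Ω → ℝ) (hYbar : MeanContinuous Ps T Ybar)
    (htermL : l T ≤ sublinE Ps fun ω => hb T ω (Ybar T ω))
    (htermU : (sublinE Ps fun ω => hb T ω (Ybar T ω)) ≤ u T) :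
    ∃ R : ℝ → ℝ,
      IsBSPsol Ps T hb l u Ybar (fun t ω => Ybar t ω + R T - R t) R ∧
      ∀ R' : ℝ → ℝ,
        IsBSPsol Ps T hb l u Ybar (fun t ω => Ybar t ω + R' T - R' t) R' →
        ∀ t ∈ Icc (0:ℝ) T, R' t = R t :=
  stmt6_general hT.le hPs hprob hHr.2.2.2.1 hHr.2.2.2.2.1 hHr.lower_lt_upper
    (hHr.isRunningLoss hPs hprob) hYbar htermL htermU
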